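/- Let m, n be positive integers. The k_q-algebra homomorphism Λ^q_{(m,n)} : k_q[a]_{m,n} → k_q[SL_{m,n}] ⊗_{k_q} k_q[a]_{m,n} determined by a_{i,j} ↦ Σ_{k=-m}^{n-1} g_{i,k} ⊗ a_{k,j} exists (the prescribed values satisfy the quantum matrix relations) and maps the quantum grassmannian k_q[Δ_{m,n}] into k_q[SL_{m,n}] ⊗_{k_q} k_q[Δ_{m,n}]; explicitly, for every m-element subset I of {-m,...,n-1}, Λ^q(D_I) = Σ_J D^{g,J}_I ⊗ D_J, summed over all m-element subsets J of {-m,...,n-1}, where D^{g,J}_I is the quantum minor of (g_{i,j}) on rows I and columns J. Writing λ^q_{(m,n)} : k_q[Δ_{m,n}] → k_q[SL_{m,n}] ⊗ k_q[Δ_{m,n}] for the restriction, for all m' ≥ m, n' ≥ n the diagram commutes: (φ^q_{(m',n',m,n)} ⊗ e^q_{(m',n',m,n)}) ∘ λ^q_{(m',n')} = λ^q_{(m,n)} ∘ e^q_{(m',n',m,n)}. -/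

import Mathlib

set_option maxHeartbeats 2000000
set_option synthInstance.maxHeartbeats 400000

noncomputable section

open TensorProduct

/-- `k_q = k[q, q⁻¹]`, the ring of Laurent polynomials over `k`. -/
abbrev kq (k : Type) [Field k] : Type := LaurentPolynomial k

/-- The parameter `q ∈ k_q`. -/
def qParam (k : Type) [Field k] : kq k := LaurentPolynomial.T 1

/-- The inverse parameter `q⁻¹ ∈ k_q`. -/
def qInv (k : Type) [Field k] : kq k := LaurentPolynomial.T (-1)

/-- Row indices of the generic `(m+n) × m` quantum matrix: integers `-m, ..., n-1`. -/
abbrev RowI (m n : ℕ) : Type := ↥(Finset.Icc (-(m : ℤ)) ((n : ℤ) - 1))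

/-- Column indices: integers `-m, ..., -1`. -/
abbrev ColI (m : ℕ) : Type := ↥(Finset.Icc (-(m : ℤ)) (-1 : ℤ))

/-- The defining relations of a quantum matrix algebra, with rows indexed by `R` and
columns indexed by `C`. -/
inductive QMRel (k : Type) [Field k] (R C : Type) [LinearOrder R] [LinearOrder C] :
    FreeAlgebra (kq k) (R × C) → FreeAlgebra (kq k) (R × C) → Prop
  | col (i i' : R) (j : C) (h : i < i') :
      QMRel k R C (FreeAlgebra.ι (kq k) (i, j) * FreeAlgebra.ι (kq k) (i', j))
        (qInv k • (FreeAlgebra.ι (kq k) (i', j) * FreeAlgebra.ι (kq k) (i, j)))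
  | row (i : R) (j j' : C) (h : j < j') :
      QMRel k R C (FreeAlgebra.ι (kq k) (i, j) * FreeAlgebra.ι (kq k) (i, j'))
        (qInv k • (FreeAlgebra.ι (kq k) (i, j') * FreeAlgebra.ι (kq k) (i, j)))
  | comm (i i' : R) (j j' : C) (h1 : i < i') (h2 : j' < j) :
      QMRel k R C (FreeAlgebra.ι (kq k) (i, j) * FreeAlgebra.ι (kq k) (i', j'))
        (FreeAlgebra.ι (kq k) (i', j') * FreeAlgebra.ι (kq k) (i, j))
  | qcomm (i i' : R) (j j' : C) (h1 : i < i') (h2 : j < j') :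
      QMRel k R C
        (FreeAlgebra.ι (kq k) (i, j) * FreeAlgebra.ι (kq k) (i', j') -
          FreeAlgebra.ι (kq k) (i', j') * FreeAlgebra.ι (kq k) (i, j))
        ((qInv k - qParam k) • (FreeAlgebra.ι (kq k) (i', j) * FreeAlgebra.ι (kq k) (i, j')))

/-- The quantum matrix algebra with rows indexed by `R` and columns indexed by `C`. -/
abbrev QMatG (k : Type) [Field k] (R C : Type) [LinearOrder R] [LinearOrder C] : Type :=
  RingQuot (QMRel k R C)

/-- The generator `a_{r,c}` of the quantum matrix algebra. -/
def qgen (k : Type) [Field k] (R C : Type) [LinearOrder R] [LinearOrder C] (r : R) (c : C) :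
    QMatG k R C :=
  RingQuot.mkAlgHom (kq k) (QMRel k R C) (FreeAlgebra.ι (kq k) (r, c))

/-- The rectangular quantum matrix algebra `k_q[a]_{m,n}`. -/
abbrev QMat (k : Type) [Field k] (m n : ℕ) : Type := QMatG k (RowI m n) (ColI m)

/-- The generator `a_{i,j}` of `k_q[a]_{m,n}`. -/
def av (k : Type) [Field k] (m n : ℕ) (i : RowI m n) (j : ColI m) : QMat k m n :=
  qgen k (RowI m n) (ColI m) i j

/-- The number of inversions of a map between finite linearly ordered sets. -/
def inversions {a b : ℕ} (f : Fin a → Fin b) : ℕ :=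
  ((Finset.univ : Finset (Fin a × Fin a)).filter fun p => p.1 < p.2 ∧ f p.2 < f p.1).card

/-- The coefficient `(-q)^{-ℓ}`. -/
def qCoeff (k : Type) [Field k] (l : ℕ) : kq k :=
  (-1 : kq k) ^ l * LaurentPolynomial.T (-(l : ℤ))

/-- The general quantum minor on rows `row 0 < row 1 < ⋯` and columns
`col 0 < col 1 < ⋯`:
`Σ_σ (-q)^{-ℓ(σ)} a_{row 0, col (σ 0)} ⋯ a_{row (s-1), col (σ (s-1))}`. -/
def qMinorG (k : Type) [Field k] (R C : Type) [LinearOrder R] [LinearOrder C]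
    (s : ℕ) (row : Fin s → R) (col : Fin s → C) : QMatG k R C :=
  ∑ σ : Equiv.Perm (Fin s),
    qCoeff k (inversions ⇑σ) •
      (List.ofFn fun t : Fin s => qgen k R C (row t) (col (σ t))).prod

/-- The quantum minor `D_{i_0 … i_{m-1}}` of `k_q[a]_{m,n}` on the rows in `I`. -/
def qMinor (k : Type) [Field k] (m n : ℕ) (I : Finset ℤ) (hI : I.card = m)
    (hsub : I ⊆ Finset.Icc (-(m : ℤ)) ((n : ℤ) - 1)) : QMat k m n :=
  qMinorG k (RowI m n) (ColI m) m
    (fun s => ⟨I.orderEmbOfFin hI s, hsub (Finset.orderEmbOfFin_mem I hI s)⟩)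
    (fun t => ⟨-(m : ℤ) + (t : ℕ), by
      have := t.2
      simp only [Finset.mem_Icc]
      omega⟩)

/-- The quantum grassmannian `k_q[Δ_{m,n}]`: the subalgebra of `k_q[a]_{m,n}` generated
by the quantum minors. -/
def QDeltaSub (k : Type) [Field k] (m n : ℕ) : Subalgebra (kq k) (QMat k m n) :=
  Algebra.adjoin (kq k) {x | ∃ I hI hsub, x = qMinor k m n I hI hsub}

/-- The square quantum matrix algebra on the indices `-m, ..., n-1`. -/
abbrev SqMat (k : Type) [Field k] (m n : ℕ) : Type := QMatG k (RowI m n) (RowI m n)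

/-- `N = m + n`, the size of the square generic quantum matrix, as the cardinality of
the index set. -/
def NN (m n : ℕ) : ℕ := (Finset.Icc (-(m : ℤ)) ((n : ℤ) - 1)).card

/-- The quantum determinant of the generic square quantum matrix. -/
def sqDet (k : Type) [Field k] (m n : ℕ) : SqMat k m n :=
  qMinorG k (RowI m n) (RowI m n) (NN m n)
    (fun t => (Finset.Icc (-(m : ℤ)) ((n : ℤ) - 1)).orderIsoOfFin rfl t)
    (fun t => (Finset.Icc (-(m : ℤ)) ((n : ℤ) - 1)).orderIsoOfFin rfl t)

/-- The quantum special linear group ring `k_q[SL_{m,n}]`: the quotient of the square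
quantum matrix algebra by the two-sided ideal generated by `(quantum determinant) − 1`. -/
abbrev QSL (k : Type) [Field k] (m n : ℕ) : Type :=
  RingQuot (fun x y : SqMat k m n => x = sqDet k m n ∧ y = 1)

/-- The quotient map onto `k_q[SL_{m,n}]`. -/
def qslMk (k : Type) [Field k] (m n : ℕ) : SqMat k m n →ₐ[kq k] QSL k m n :=
  RingQuot.mkAlgHom (kq k) _

/-- The generator `g_{i,j}` of `k_q[SL_{m,n}]`. -/
def qgSL (k : Type) [Field k] (m n : ℕ) (i j : RowI m n) : QSL k m n :=
  qslMk k m n (qgen k (RowI m n) (RowI m n) i j)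

/-- `(-q)^z` for an integer exponent `z`. -/
def negqPow (k : Type) [Field k] (z : ℤ) : kq k :=
  (if Even z then 1 else -1) * LaurentPolynomial.T z

lemma card_erase_univ (m n : ℕ) (i : RowI m n) :
    ((Finset.univ : Finset (RowI m n)).erase i).card = NN m n - 1 := by
  simp [Finset.card_erase_of_mem, Finset.card_univ, NN]

/-- The quantum minor `D^{g,J}_I` of the generic square quantum matrix `(g_{i,j})` on
rows `I` and columns `J`, as an element of `k_q[SL_{m,n}]`. -/
def qgMinor (k : Type) [Field k] (m n s : ℕ) (I J : Finset ℤ)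
    (hI : I.card = s) (hJ : J.card = s)
    (hIs : I ⊆ Finset.Icc (-(m : ℤ)) ((n : ℤ) - 1))
    (hJs : J ⊆ Finset.Icc (-(m : ℤ)) ((n : ℤ) - 1)) : QSL k m n :=
  qslMk k m n (qMinorG k (RowI m n) (RowI m n) s
    (fun t => ⟨I.orderEmbOfFin hI t, hIs (Finset.orderEmbOfFin_mem I hI t)⟩)
    (fun t => ⟨J.orderEmbOfFin hJ t, hJs (Finset.orderEmbOfFin_mem J hJ t)⟩))

/-- The defining property of `E^q_{(m',n',m,n)}` on the generators. -/
def EqProp (k : Type) [Field k] (m n m' n' : ℕ)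
    (E : QMat k m' n' →ₐ[kq k] QMat k m n) : Prop :=
  ∀ (i : RowI m' n') (j : ColI m'),
    E (av k m' n' i j) =
      if h : (i.1 ∈ Finset.Icc (-(m : ℤ)) ((n : ℤ) - 1)) ∧
          (j.1 ∈ Finset.Icc (-(m : ℤ)) (-1 : ℤ)) then
        av k m n ⟨i.1, h.1⟩ ⟨j.1, h.2⟩
      else if i.1 = j.1 then 1 else 0

/-- The defining property of `φ^q_{(m',n',m,n)}` on the generators. -/
def phiqProp (k : Type) [Field k] (m n m' n' : ℕ)
    (φ : QSL k m' n' →ₐ[kq k] QSL k m n) : Prop :=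
  ∀ i j : RowI m' n',
    φ (qgSL k m' n' i j) =
      if h : (i.1 ∈ Finset.Icc (-(m : ℤ)) ((n : ℤ) - 1)) ∧
          (j.1 ∈ Finset.Icc (-(m : ℤ)) ((n : ℤ) - 1)) then
        qgSL k m n ⟨i.1, h.1⟩ ⟨j.1, h.2⟩
      else if i.1 = j.1 then 1 else 0

/-- The defining property of the coaction `Λ^q_{(m,n)}` on the generators:
`a_{i,j} ↦ Σ_l g_{i,l} ⊗ a_{l,j}`. -/
def coactqProp (k : Type) [Field k] (m n : ℕ)
    (Λ : QMat k m n →ₐ[kq k] QSL k m n ⊗[kq k] QMat k m n) : Prop :=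
  ∀ (i : RowI m n) (j : ColI m),
    Λ (av k m n i j) = ∑ l : RowI m n, qgSL k m n i l ⊗ₜ[kq k] av k m n l j

/-!
The defining relations of a quantum matrix are equivalent to the RTT relations, a single family of
equations `R x₁ x₂ = x₂ x₁ R` in which row indices and column indices enter symmetrically. These are
visibly inherited by the product `∑ l, x_{il} ⊗ y_{lj}` of two quantum matrices, which gives the
coaction `Λ^q`.

For a quantum matrix `y`, pairing each permutation `σ` with `σ ∘ (t, t + 1)` writes a quantum minor
as a combination of products containing a `2 × 2` quantum minor on rows `t, t + 1`. Hence exchanging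
two adjacent rows in increasing order multiplies the minor by `-q⁻¹`, and a minor with a repeated
row vanishes. In the expansion of a minor of `∑ l, x_{il} ⊗ y_{lj}` over all maps `f` from rows to
the summation index, only injective `f` survive, and sorting `f = J ∘ σ` produces the coefficient
`(-q)^{-ℓ(σ)}` needed for the minor of `x` on the columns `J`: this is the quantum Cauchy–Binet
formula.

The transition maps replace a generic matrix by its extension by an identity block, an operation
compatible with the matrix product, so that the diagram commutes already on generators.
-/

section Coefficients

variable (k : Type) [Field k]

lemma qInv_mul_qParam : qInv k * qParam k = 1 := by
  rw [qInv, qParam, ← LaurentPolynomial.T_add, neg_add_cancel, LaurentPolynomial.T_zero]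

lemma qCoeff_succ (l : ℕ) : qCoeff k (l + 1) = -qInv k * qCoeff k l := by
  simp only [qCoeff, qInv, pow_succ]
  push_cast
  rw [neg_add, LaurentPolynomial.T_add]
  ring

end Coefficients

section QuantumMatrix

variable (k : Type) [Field k]

/-- A family `x i j` of elements of a `k_q`-algebra is a quantum matrix if it satisfies the
relations between the generators of `QMatG`. The last relation is written without subtraction, so
that the notion makes sense over a semiring. -/
structure IsQuantumMatrix {R C A : Type*} [LinearOrder R] [LinearOrder C] [Semiring A]
    [Algebra (kq k) A] (x : R → C → A) : Prop where
  col : ∀ {i i'} (j), i < i' → x i j * x i' j = qInv k • (x i' j * x i j)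
  row : ∀ (i) {j j'}, j < j' → x i j * x i j' = qInv k • (x i j' * x i j)
  comm : ∀ {i i' j j'}, i < i' → j' < j → x i j * x i' j' = x i' j' * x i j
  qcomm : ∀ {i i' j j'}, i < i' → j < j' →
    x i j * x i' j' = x i' j' * x i j + (qInv k - qParam k) • (x i' j * x i j')

lemma freeAlgebra_map_sub_eq_iff {X A : Type*} [Semiring A] [Algebra (kq k) A]
    (f : FreeAlgebra (kq k) X →ₐ[kq k] A) (a b : FreeAlgebra (kq k) X) (c : A) :
    f (a - b) = c ↔ f a = f b + c := by
  have hsub : a - b = a + (-1 : kq k) • b := sub_eq_add_neg a b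
  rw [hsub, map_add, map_smul]
  constructor
  · rintro rfl
    module
  · intro h
    rw [h]
    module

lemma isQuantumMatrix_qgen (R C : Type) [LinearOrder R] [LinearOrder C] :
    IsQuantumMatrix k (qgen k R C) where
  col j h := by simpa [qgen] using RingQuot.mkAlgHom_rel (kq k) (QMRel.col (k := k) _ _ j h)
  row i _ _ h := by simpa [qgen] using RingQuot.mkAlgHom_rel (kq k) (QMRel.row (k := k) i _ _ h)
  comm h h' := by
    simpa [qgen] using RingQuot.mkAlgHom_rel (kq k) (QMRel.comm (k := k) _ _ _ _ h h')
  qcomm h h' := by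
    have hrel := RingQuot.mkAlgHom_rel (kq k) (QMRel.qcomm (k := k) _ _ _ _ h h')
    simpa [qgen] using (freeAlgebra_map_sub_eq_iff k _ _ _ _).mp hrel

lemma algHom_ext_qgen {R C A : Type} [LinearOrder R] [LinearOrder C] [Semiring A]
    [Algebra (kq k) A] {f g : QMatG k R C →ₐ[kq k] A}
    (h : ∀ i j, f (qgen k R C i j) = g (qgen k R C i j)) : f = g :=
  RingQuot.ringQuot_ext' _ _ _ (FreeAlgebra.hom_ext (funext fun p => h p.1 p.2))

/-- The coefficient of the diagonal part of the R-matrix, normalised so that its off-diagonal part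
is the flip with coefficient `1`; this accounts for the `-1` at `a = b`. -/
def rttCoeff {X : Type*} [LinearOrder X] (a b : X) : kq k :=
  if a = b then qInv k - 1 else if a < b then qInv k - qParam k else 0

section rttCoeff

variable {X : Type*} [LinearOrder X] {a b : X}

lemma rttCoeff_self (a : X) : rttCoeff k a a = qInv k - 1 := if_pos rfl

lemma rttCoeff_of_lt (h : a < b) : rttCoeff k a b = qInv k - qParam k := by
  rw [rttCoeff, if_neg h.ne, if_pos h]

lemma rttCoeff_of_gt (h : b < a) : rttCoeff k a b = 0 := by
  rw [rttCoeff, if_neg h.ne', if_neg h.not_gt]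

end rttCoeff

variable {k} {R C M A B : Type*} [LinearOrder R] [LinearOrder C] [LinearOrder M]
  [Semiring A] [Algebra (kq k) A] [Semiring B] [Algebra (kq k) B]

lemma IsQuantumMatrix.map {x : R → C → A} (hx : IsQuantumMatrix k x) (f : A →ₐ[kq k] B) :
    IsQuantumMatrix k fun i j => f (x i j) where
  col j h := by simpa using congrArg f (hx.col j h)
  row i _ _ h := by simpa using congrArg f (hx.row i h)
  comm h h' := by simpa using congrArg f (hx.comm h h')
  qcomm h h' := by simpa using congrArg f (hx.qcomm h h')

lemma IsQuantumMatrix.exists_algHom {R C : Type} [LinearOrder R] [LinearOrder C]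
    {x : R → C → A} (hx : IsQuantumMatrix k x) :
    ∃ f : QMatG k R C →ₐ[kq k] A, ∀ i j, f (qgen k R C i j) = x i j := by
  let F : FreeAlgebra (kq k) (R × C) →ₐ[kq k] A := FreeAlgebra.lift (kq k) fun p => x p.1 p.2
  have hF : ∀ ⦃a b⦄, QMRel k R C a b → F a = F b := by
    intro a b h
    induction h with
    | col _ _ j h => simpa [F] using hx.col j h
    | row i _ _ h => simpa [F] using hx.row i h
    | comm _ _ _ _ h h' => simpa [F] using hx.comm h h'
    | qcomm _ _ _ _ h h' =>
      rw [freeAlgebra_map_sub_eq_iff]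
      simpa [F] using hx.qcomm h h'
  exact ⟨RingQuot.liftAlgHom (kq k) ⟨F, hF⟩, fun i j => by simp [qgen, F]⟩

theorem IsQuantumMatrix.rtt {x : R → C → A} (hx : IsQuantumMatrix k x) (i i' : R) (j j' : C) :
    rttCoeff k i i' • (x i j * x i' j') + x i' j * x i j' =
      rttCoeff k j j' • (x i j * x i' j') + x i j' * x i' j := by
  have hq := qInv_mul_qParam k
  rcases lt_trichotomy i i' with hi | rfl | hi <;> rcases lt_trichotomy j j' with hj | rfl | hj
  · rw [rttCoeff_of_lt k hi, rttCoeff_of_lt k hj, hx.comm hi hj]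
  · rw [rttCoeff_of_lt k hi, rttCoeff_self, hx.col j hi]
    match_scalars
    linear_combination -hq
  · rw [rttCoeff_of_lt k hi, rttCoeff_of_gt k hj, hx.comm hi hj, hx.qcomm hi hj]
    module
  · rw [rttCoeff_self, rttCoeff_of_lt k hj, hx.row i hj]
    match_scalars
    linear_combination hq
  · rw [rttCoeff_self, rttCoeff_self]
  · rw [rttCoeff_self, rttCoeff_of_gt k hj, hx.row i hj]
    module
  · rw [rttCoeff_of_gt k hi, rttCoeff_of_lt k hj, hx.qcomm hi hj]
    module
  · rw [rttCoeff_of_gt k hi, rttCoeff_self, hx.col j hi]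
    module
  · rw [rttCoeff_of_gt k hi, rttCoeff_of_gt k hj, hx.comm hi hj]

theorem isQuantumMatrix_of_rtt {x : R → C → A}
    (hx : ∀ i i' j j', rttCoeff k i i' • (x i j * x i' j') + x i' j * x i j' =
      rttCoeff k j j' • (x i j * x i' j') + x i j' * x i' j) :
    IsQuantumMatrix k x where
  col {i i'} j hi := by
    have h := hx i' i j j
    rw [rttCoeff_of_gt k hi, rttCoeff_self, zero_smul, zero_add] at h
    rw [h]
    module
  row i {j j'} hj := by
    have h := hx i i j' j
    rw [rttCoeff_of_gt k hj, rttCoeff_self, zero_smul, zero_add] at h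
    rw [← h]
    module
  comm {i i' j j'} hi hj := by
    simpa [rttCoeff_of_gt k hi, rttCoeff_of_gt k hj] using hx i' i j j'
  qcomm {i i' j j'} hi hj := by
    simpa [rttCoeff_of_gt k hi, rttCoeff_of_lt k hj, add_comm] using hx i' i j j'

/-- The matrix product `(x y)_{ij} = ∑ l, x_{il} ⊗ y_{lj}`, with entries in the tensor product. -/
def tensorMul (k : Type) [Field k] {R M C A B : Type*} [Fintype M] [Semiring A] [Algebra (kq k) A]
    [Semiring B] [Algebra (kq k) B] (x : R → M → A) (y : M → C → B) (i : R) (j : C) :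
    A ⊗[kq k] B :=
  ∑ l, x i l ⊗ₜ[kq k] y l j

omit [LinearOrder R] [LinearOrder C] [LinearOrder M] in
lemma tensorMul_mul_tensorMul [Fintype M] (x : R → M → A) (y : M → C → B) (i i' : R) (j j' : C) :
    tensorMul k x y i j * tensorMul k x y i' j' =
      ∑ l, ∑ p, (x i l * x i' p) ⊗ₜ[kq k] (y l j * y p j') := by
  simp only [tensorMul, Finset.sum_mul_sum, Algebra.TensorProduct.tmul_mul_tmul]

theorem IsQuantumMatrix.tensorMul [Fintype M] {x : R → M → A} (hx : IsQuantumMatrix k x)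
    {y : M → C → B} (hy : IsQuantumMatrix k y) : IsQuantumMatrix k (tensorMul k x y) := by
  refine isQuantumMatrix_of_rtt fun i i' j j' => ?_
  simp only [tensorMul_mul_tensorMul]
  calc
    rttCoeff k i i' • ∑ l, ∑ p, (x i l * x i' p) ⊗ₜ[kq k] (y l j * y p j') +
        ∑ l, ∑ p, (x i' l * x i p) ⊗ₜ[kq k] (y l j * y p j')
      = ∑ l, ∑ p, (rttCoeff k l p • (x i l * x i' p) + x i p * x i' l) ⊗ₜ[kq k]
          (y l j * y p j') := by
        simp only [← hx.rtt, Finset.smul_sum, ← Finset.sum_add_distrib, add_tmul, smul_tmul']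
    _ = ∑ l, ∑ p, (x i l * x i' p) ⊗ₜ[kq k]
          (rttCoeff k l p • (y l j * y p j') + y p j * y l j') := by
        simp only [add_tmul, tmul_add, Finset.sum_add_distrib, smul_tmul]
        rw [Finset.sum_comm (f := fun l p => (x i p * x i' l) ⊗ₜ[kq k] (y l j * y p j'))]
    _ = _ := by
        simp only [hy.rtt, Finset.smul_sum, ← Finset.sum_add_distrib, tmul_add, tmul_smul]

end QuantumMatrix

section AdjacentTranspositions

open Equiv

variable {s : ℕ} {t t' : Fin s}

lemma swap_lt_swap_iff_of_covBy (htt' : t ⋖ t') {a b : Fin s} (hab : ¬(a = t ∧ b = t'))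
    (hba : ¬(a = t' ∧ b = t)) : swap t t' a < swap t t' b ↔ a < b := by
  rw [Fin.covBy_iff, Nat.covBy_iff_add_one_eq] at htt'
  simp only [swap_apply_def, Fin.ext_iff, Fin.lt_def] at *
  split_ifs <;> omega

lemma inversions_mul_swap (htt' : t ⋖ t') {σ : Perm (Fin s)} (hσ : σ t < σ t') :
    inversions ⇑(σ * swap t t') = inversions ⇑σ + 1 := by
  have hlt : t < t' := htt'.lt
  rw [inversions, inversions, ← Finset.card_map (prodCongr (swap t t') (swap t t')).toEmbedding,
    ← Finset.card_insert_of_notMem (a := (t', t)) (by simp [hlt.not_gt])]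
  congr 1
  ext ⟨a, b⟩
  simp only [Finset.mem_map_equiv, Finset.mem_filter, Finset.mem_univ, true_and,
    Finset.mem_insert, prodCongr_symm, symm_swap, prodCongr_apply, Prod.map, Prod.mk.injEq]
  simp only [Perm.mul_apply, swap_apply_self]
  by_cases h : a = t ∧ b = t'
  · obtain ⟨rfl, rfl⟩ := h
    simp [hlt.not_gt, hlt.ne, hσ.not_gt]
  by_cases h' : a = t' ∧ b = t
  · obtain ⟨rfl, rfl⟩ := h'
    simp [hlt, hσ]
  · rw [swap_lt_swap_iff_of_covBy htt' h h']
    simp [h']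

lemma inversions_one : inversions ⇑(1 : Perm (Fin s)) = 0 := by
  rw [inversions, Finset.card_eq_zero, Finset.filter_eq_empty_iff]
  exact fun p _ h => h.1.not_gt h.2

@[elab_as_elim]
theorem perm_induction_mul_swap_of_covBy {P : Perm (Fin s) → Prop} (one : P 1)
    (mul_swap : ∀ (σ : Perm (Fin s)) (t t' : Fin s), t ⋖ t' → σ t < σ t' → P σ →
      P (σ * swap t t')) (σ : Perm (Fin s)) : P σ := by
  induction hl : inversions ⇑σ using Nat.strong_induction_on generalizing σ with
  | _ l ih =>
    by_cases hσ : Monotone σ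
    · rwa [(Perm.monotone_iff σ).mp hσ]
    · obtain ⟨t, t', htt', hdesc⟩ : ∃ t t', t ⋖ t' ∧ σ t' < σ t := by
        simpa [monotone_iff_forall_covBy] using hσ
      have hasc : (σ * swap t t') t < (σ * swap t t') t' := by simpa using hdesc
      have hσσ : σ = σ * swap t t' * swap t t' := by simp [mul_assoc]
      have hinv := inversions_mul_swap htt' hasc
      rw [← hσσ] at hinv
      rw [hσσ]
      exact mul_swap _ _ _ htt' hasc (ih _ (by omega) _ rfl)

lemma sum_perm_eq_sum_add_mul_swap {N : Type*} [AddCommMonoid N] (htt' : t ≠ t')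
    (F : Perm (Fin s) → N) :
    ∑ σ, F σ = ∑ σ with σ t < σ t', (F σ + F (σ * swap t t')) := by
  rw [← Finset.sum_filter_add_sum_filter_not Finset.univ
    (fun σ : Perm (Fin s) => σ t < σ t'), Finset.sum_add_distrib]
  congr 1
  have hne (σ : Perm (Fin s)) : σ t ≠ σ t' := σ.injective.ne htt'
  refine Finset.sum_equiv (Equiv.mulRight (swap t t')) (fun σ => ?_) fun σ _ => ?_
  · simp [(hne σ).symm.le_iff_lt]
  · simp [mul_assoc]

end AdjacentTranspositions

lemma exists_prod_ofFn_eq_mul_mul {A : Type*} [Monoid A] {s : ℕ} {t t' : Fin s} (htt' : t ⋖ t')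
    (h : Fin s → A) :
    ∃ L R : A, ∀ h' : Fin s → A, Set.EqOn h' h {t, t'}ᶜ →
      (List.ofFn h').prod = L * (h' t * h' t') * R := by
  rw [Fin.covBy_iff, Nat.covBy_iff_add_one_eq] at htt'
  refine ⟨((List.ofFn h).take t).prod, ((List.ofFn h).drop (t + 2)).prod, fun h' hh' => ?_⟩
  have hoff (i : Fin s) (hi : (i : ℕ) ≠ t) (hi' : (i : ℕ) ≠ t + 1) : h' i = h i :=
    hh' (by simp [Fin.ext_iff]; omega)
  have htake : (List.ofFn h').take t = (List.ofFn h).take t :=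
    List.ext_getElem (by simp) fun i hi _ => by
      simp only [List.length_take, List.length_ofFn] at hi
      simp only [List.getElem_take, List.getElem_ofFn]
      exact hoff _ (by dsimp only; omega) (by dsimp only; omega)
  have hdrop : (List.ofFn h').drop (t + 2) = (List.ofFn h).drop (t + 2) :=
    List.ext_getElem (by simp) fun i hi _ => by
      simp only [List.getElem_drop, List.getElem_ofFn]
      exact hoff _ (by dsimp only; omega) (by dsimp only; omega)
  rw [← List.prod_take_mul_prod_drop (List.ofFn h') t, List.drop_eq_getElem_cons (by simp),
    List.drop_eq_getElem_cons (by simp; omega), List.prod_cons, List.prod_cons, htake, hdrop]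
  have ht' : (⟨t + 1, by omega⟩ : Fin s) = t' := Fin.ext htt'
  simp [ht', mul_assoc]

section QuantumMinor

open Equiv

/-- The quantum minor of a family `x` of elements of a `k_q`-algebra; `qMinorG` is the special case
of the generators. -/
def quantumMinor (k : Type) [Field k] {R C A : Type*} [Semiring A] [Algebra (kq k) A] {s : ℕ}
    (x : R → C → A) (row : Fin s → R) (col : Fin s → C) : A :=
  ∑ σ : Perm (Fin s), qCoeff k (inversions ⇑σ) • (List.ofFn fun t => x (row t) (col (σ t))).prod

variable {k : Type} [Field k] {R C M A B : Type*} [Semiring A] [Algebra (kq k) A]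
  [Semiring B] [Algebra (kq k) B] {s : ℕ}

lemma map_quantumMinor (φ : A →ₐ[kq k] B) (x : R → C → A) (row : Fin s → R) (col : Fin s → C) :
    φ (quantumMinor k x row col) = quantumMinor k (fun i j => φ (x i j)) row col := by
  simp only [quantumMinor, map_sum, map_smul, map_list_prod, List.map_ofFn, Function.comp_def]

/-- The quantum minor on the rows `i, i'` and the columns `j, j'`. -/
def quantumMinorTwo (k : Type) [Field k] {R C A : Type*} [Semiring A] [Algebra (kq k) A]
    (x : R → C → A) (i i' : R) (j j' : C) : A :=
  x i j * x i' j' + -qInv k • (x i j' * x i' j)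

lemma exists_quantumMinor_eq_sum_two (x : R → C → A) (row : Fin s → R) (col : Fin s → C)
    {t t' : Fin s} (htt' : t ⋖ t') :
    ∃ l r : Perm (Fin s) → A, ∀ row' : Fin s → R, Set.EqOn row' row {t, t'}ᶜ →
      quantumMinor k x row' col = ∑ σ : Perm (Fin s) with σ t < σ t', qCoeff k (inversions ⇑σ) •
        (l σ * quantumMinorTwo k x (row' t) (row' t') (col (σ t)) (col (σ t')) * r σ) := by
  choose l r hlr using fun σ : Perm (Fin s) =>
    exists_prod_ofFn_eq_mul_mul htt' fun i => x (row i) (col (σ i))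
  refine ⟨l, r, fun row' hrow' => ?_⟩
  rw [quantumMinor, sum_perm_eq_sum_add_mul_swap htt'.lt.ne]
  refine Finset.sum_congr rfl fun σ hσ => ?_
  have hswap : Set.EqOn (fun i => x (row' i) (col ((σ * swap t t') i)))
      (fun i => x (row i) (col (σ i))) {t, t'}ᶜ := fun i hi => by
    simp only [Set.mem_compl_iff, Set.mem_insert_iff, Set.mem_singleton_iff, not_or] at hi
    simp [hrow' (by simpa using hi), swap_apply_of_ne_of_ne hi.1 hi.2]
  rw [hlr σ _ fun i hi => by rw [hrow' hi], hlr σ _ hswap,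
    inversions_mul_swap htt' (by simpa using hσ), qCoeff_succ]
  simp only [Perm.coe_mul, Function.comp_apply, swap_apply_left, swap_apply_right,
    quantumMinorTwo, mul_add, add_mul, smul_add, mul_smul_comm, smul_mul_assoc]
  module

variable [LinearOrder R] [LinearOrder C] {y : R → C → A}

lemma IsQuantumMatrix.quantumMinorTwo_swap (hy : IsQuantumMatrix k y) {i i' : R} {j j' : C}
    (hi : i < i') (hj : j < j') :
    quantumMinorTwo k y i' i j j' = -qInv k • quantumMinorTwo k y i i' j j' := by
  rw [quantumMinorTwo, quantumMinorTwo, hy.qcomm hi hj, hy.comm hi hj]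
  match_scalars
  · linear_combination -qInv_mul_qParam k
  · ring

lemma IsQuantumMatrix.quantumMinorTwo_self (hy : IsQuantumMatrix k y) (i : R) {j j' : C}
    (hj : j < j') : quantumMinorTwo k y i i j j' = 0 := by
  rw [quantumMinorTwo, hy.row i hj]
  module

lemma IsQuantumMatrix.quantumMinor_comp_swap (hy : IsQuantumMatrix k y) {row : Fin s → R}
    {col : Fin s → C} (hcol : StrictMono col) {t t' : Fin s} (htt' : t ⋖ t')
    (hrow : row t < row t') :
    quantumMinor k y (row ∘ swap t t') col = -qInv k • quantumMinor k y row col := by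
  obtain ⟨l, r, hlr⟩ := exists_quantumMinor_eq_sum_two (k := k) y row col htt'
  have hswap : Set.EqOn (row ∘ swap t t') row {t, t'}ᶜ := fun i hi => by
    simp only [Set.mem_compl_iff, Set.mem_insert_iff, Set.mem_singleton_iff, not_or] at hi
    rw [Function.comp_apply, swap_apply_of_ne_of_ne hi.1 hi.2]
  rw [hlr _ hswap, hlr _ (Set.eqOn_refl _ _), Finset.smul_sum]
  refine Finset.sum_congr rfl fun σ hσ => ?_
  have hσ' : σ t < σ t' := by simpa using hσ
  rw [Function.comp_apply, Function.comp_apply, swap_apply_left, swap_apply_right,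
    hy.quantumMinorTwo_swap hrow (hcol hσ'), mul_smul_comm, smul_mul_assoc, smul_comm]

lemma IsQuantumMatrix.quantumMinor_eq_zero_of_covBy (hy : IsQuantumMatrix k y) {row : Fin s → R}
    {col : Fin s → C} (hcol : StrictMono col) {t t' : Fin s} (htt' : t ⋖ t')
    (hrow : row t = row t') : quantumMinor k y row col = 0 := by
  obtain ⟨l, r, hlr⟩ := exists_quantumMinor_eq_sum_two (k := k) y row col htt'
  rw [hlr _ (Set.eqOn_refl _ _)]
  refine Finset.sum_eq_zero fun σ hσ => ?_
  have hσ' : σ t < σ t' := by simpa using hσ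
  rw [hrow, hy.quantumMinorTwo_self _ (hcol hσ'), mul_zero, zero_mul, smul_zero]

theorem IsQuantumMatrix.quantumMinor_comp_perm (hy : IsQuantumMatrix k y) {row : Fin s → R}
    (hrow : StrictMono row) {col : Fin s → C} (hcol : StrictMono col) (σ : Perm (Fin s)) :
    quantumMinor k y (row ∘ σ) col = qCoeff k (inversions ⇑σ) • quantumMinor k y row col := by
  induction σ using perm_induction_mul_swap_of_covBy with
  | one =>
    rw [inversions_one]
    simp [qCoeff]
  | mul_swap σ t t' htt' hσ ih =>
    rw [Perm.coe_mul, ← Function.comp_assoc,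
      hy.quantumMinor_comp_swap (row := row ∘ σ) hcol htt' (hrow hσ), ih, smul_smul, ← qCoeff_succ,
      ← Perm.coe_mul, inversions_mul_swap htt' hσ]

theorem IsQuantumMatrix.quantumMinor_eq_zero_of_not_injective (hy : IsQuantumMatrix k y)
    {row : Fin s → R} (hrow : ¬Function.Injective row) {col : Fin s → C} (hcol : StrictMono col) :
    quantumMinor k y row col = 0 := by
  have hmono : Monotone (row ∘ Tuple.sort row) := Tuple.monotone_sort row
  suffices h : ∀ σ : Perm (Fin s), quantumMinor k y ((row ∘ Tuple.sort row) ∘ σ) col = 0 by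
    simpa [Function.comp_assoc] using h (Tuple.sort row)⁻¹
  intro σ
  induction σ using perm_induction_mul_swap_of_covBy with
  | one =>
    have hnot : ¬StrictMono (row ∘ Tuple.sort row) := fun h =>
      hrow ((Equiv.injective_comp _ _).mp h.injective)
    obtain ⟨t, t', htt', hle⟩ : ∃ t t', t ⋖ t' ∧
        (row ∘ Tuple.sort row) t' ≤ (row ∘ Tuple.sort row) t := by
      simpa [strictMono_iff_forall_covBy] using hnot
    exact hy.quantumMinor_eq_zero_of_covBy hcol htt' ((hmono htt'.le).antisymm hle)
  | mul_swap σ t t' htt' hσ ih =>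
    rw [Perm.coe_mul, ← Function.comp_assoc]
    rcases (hmono hσ.le).lt_or_eq with hlt | heq
    · rw [hy.quantumMinor_comp_swap hcol htt' hlt, ih, smul_zero]
    · change ((row ∘ Tuple.sort row) ∘ σ) t = ((row ∘ Tuple.sort row) ∘ σ) t' at heq
      rwa [Equiv.comp_swap_eq_update, heq, Function.update_eq_self, ← heq,
        Function.update_eq_self]

end QuantumMinor

section SumOverFunctions

variable {s : ℕ} {M : Type*} [LinearOrder M]

lemma orderEmb_comp_perm_injective :
    Function.Injective fun p : (Fin s ↪o M) × Equiv.Perm (Fin s) => p.1 ∘ p.2 := by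
  rintro ⟨J, σ⟩ ⟨J', σ'⟩ (h : J ∘ σ = J' ∘ σ')
  have hJ : (J ∘ σ) ∘ ⇑σ⁻¹ = J := by ext; simp
  have hJ' : (J ∘ σ) ∘ ⇑σ'⁻¹ = J' := by rw [h]; ext; simp
  obtain rfl : J = J' := DFunLike.coe_injective <| by
    rw [← hJ, ← hJ']
    exact Tuple.unique_monotone (by rw [hJ]; exact J.monotone) (by rw [hJ']; exact J'.monotone)
  rw [DFunLike.coe_injective (J.injective.comp_left h)]

lemma exists_orderEmb_comp_perm_eq {f : Fin s → M} (hf : Function.Injective f) :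
    ∃ (J : Fin s ↪o M) (σ : Equiv.Perm (Fin s)), J ∘ σ = f :=
  ⟨OrderEmbedding.ofStrictMono _ ((Tuple.monotone_sort f).strictMono_of_injective
    (hf.comp (Tuple.sort f).injective)), (Tuple.sort f)⁻¹, by ext; simp⟩

lemma sum_eq_sum_orderEmb_sum_perm {N : Type*} [Fintype M] [AddCommMonoid N]
    (F : (Fin s → M) → N) (hF : ∀ f, ¬Function.Injective f → F f = 0) :
    ∑ f, F f = ∑ J : Fin s ↪o M, ∑ σ : Equiv.Perm (Fin s), F (J ∘ σ) := by
  rw [← Fintype.sum_prod_type' fun (J : Fin s ↪o M) (σ : Equiv.Perm (Fin s)) => F (J ∘ σ)]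
  refine (Fintype.sum_of_injective _ orderEmb_comp_perm_injective _ _ (fun f hf => ?_)
    fun _ => rfl).symm
  refine hF f fun hinj => hf ?_
  obtain ⟨J, σ, h⟩ := exists_orderEmb_comp_perm_eq hinj
  exact ⟨(J, σ), h⟩

end SumOverFunctions

section CauchyBinet

lemma prod_ofFn_sum {M A : Type*} [Fintype M] [Semiring A] {s : ℕ} (x : Fin s → M → A) :
    (List.ofFn fun i => ∑ l, x i l).prod =
      ∑ f : Fin s → M, (List.ofFn fun i => x i (f i)).prod := by
  classical
  simpa [MultilinearMap.mkPiAlgebraFin_apply] using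
    (MultilinearMap.mkPiAlgebraFin ℕ s A).map_sum (g := x)

lemma prod_ofFn_tmul {K A B : Type*} [CommSemiring K] [Semiring A] [Algebra K A] [Semiring B]
    [Algebra K B] {s : ℕ} (x : Fin s → A) (y : Fin s → B) :
    (List.ofFn fun i => x i ⊗ₜ[K] y i).prod = (List.ofFn x).prod ⊗ₜ[K] (List.ofFn y).prod := by
  induction s with
  | zero => simp [Algebra.TensorProduct.one_def]
  | succ s ih =>
    simp only [List.ofFn_succ, List.prod_cons, ih, Algebra.TensorProduct.tmul_mul_tmul]

variable {k : Type} [Field k] {R M C A B : Type*} [Fintype M] [Semiring A] [Algebra (kq k) A]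
  [Semiring B] [Algebra (kq k) B] {s : ℕ}

lemma quantumMinor_tensorMul_eq_sum (x : R → M → A) (y : M → C → B) (row : Fin s → R)
    (col : Fin s → C) :
    quantumMinor k (tensorMul k x y) row col =
      ∑ f : Fin s → M, (List.ofFn fun t => x (row t) (f t)).prod ⊗ₜ[kq k]
        quantumMinor k y f col := by
  simp only [quantumMinor, tensorMul, prod_ofFn_sum, prod_ofFn_tmul, tmul_sum, tmul_smul,
    Finset.smul_sum]
  exact Finset.sum_comm

theorem IsQuantumMatrix.quantumMinor_tensorMul [LinearOrder M] [LinearOrder C] (x : R → M → A)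
    {y : M → C → B} (hy : IsQuantumMatrix k y) (row : Fin s → R) {col : Fin s → C}
    (hcol : StrictMono col) :
    quantumMinor k (_root_.tensorMul k x y) row col =
      ∑ J : Fin s ↪o M, quantumMinor k x row J ⊗ₜ[kq k] quantumMinor k y J col := by
  rw [quantumMinor_tensorMul_eq_sum, sum_eq_sum_orderEmb_sum_perm _ fun f hf => by
    rw [hy.quantumMinor_eq_zero_of_not_injective hf hcol, tmul_zero]]
  refine Finset.sum_congr rfl fun J _ => ?_
  rw [quantumMinor.eq_def k x row J, sum_tmul]
  refine Finset.sum_congr rfl fun σ _ => ?_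
  rw [hy.quantumMinor_comp_perm J.strictMono hcol, smul_tmul]
  rfl

end CauchyBinet

section Transition

/-- Extends a matrix with rows `S` and columns `T` by the identity matrix, as the transition maps
`e^q` and `φ^q` do on generators. -/
def padIdentity {ι A : Type*} [DecidableEq ι] [Zero A] [One A] {S T : Finset ι} (x : S → T → A)
    (i j : ι) : A :=
  if h : i ∈ S ∧ j ∈ T then x ⟨i, h.1⟩ ⟨j, h.2⟩ else if i = j then 1 else 0

variable {ι : Type*} [DecidableEq ι] {S T : Finset ι} {i j : ι}

section

variable {A : Type*} [Zero A] [One A] (x : S → T → A)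

lemma padIdentity_coe (i : S) (j : T) : padIdentity x i j = x i j := dif_pos ⟨i.2, j.2⟩

lemma padIdentity_of_row_notMem (hi : i ∉ S) : padIdentity x i j = if i = j then 1 else 0 :=
  dif_neg fun h => hi h.1

lemma padIdentity_of_col_notMem (hj : j ∉ T) : padIdentity x i j = if i = j then 1 else 0 :=
  dif_neg fun h => hj h.2

end

lemma map_padIdentity {F A B : Type*} [Semiring A] [Semiring B] [FunLike F A B]
    [RingHomClass F A B] (f : F) (x : S → T → A) (i j : ι) :
    f (padIdentity x i j) = padIdentity (fun i j => f (x i j)) i j := by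
  simp only [padIdentity, apply_dite f, apply_ite f, map_one, map_zero]

theorem sum_padIdentity_tmul_padIdentity {k : Type} [Field k] {A B : Type*} [Semiring A]
    [Algebra (kq k) A] [Semiring B] [Algebra (kq k) B] (x : S → S → A) (y : S → T → B)
    {S' : Finset ι} (hS : S ⊆ S') (hT : T ⊆ S) (hj : j ∈ S') (hjT : j ∈ S → j ∈ T) :
    ∑ l ∈ S', padIdentity x i l ⊗ₜ[kq k] padIdentity y l j = padIdentity (tensorMul k x y) i j := by
  by_cases hT' : j ∈ T
  · have hout : ∀ l ∈ S', l ∉ S → padIdentity x i l ⊗ₜ[kq k] padIdentity y l j = 0 := by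
      intro l _ hl
      rw [padIdentity_of_row_notMem y hl, if_neg (by rintro rfl; exact hl (hT hT')), tmul_zero]
    rw [← Finset.sum_subset hS hout]
    by_cases hi : i ∈ S
    · lift i to S using hi
      lift j to T using hT'
      rw [padIdentity_coe, tensorMul, ← Finset.sum_coe_sort]
      simp only [padIdentity_coe]
    · rw [padIdentity_of_row_notMem _ hi, if_neg (by rintro rfl; exact hi (hT hT'))]
      refine Finset.sum_eq_zero fun l hl => ?_
      rw [padIdentity_of_row_notMem x hi, if_neg (by rintro rfl; exact hi hl), zero_tmul]
  · have hjS : j ∉ S := fun h => hT' (hjT h)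
    simp only [padIdentity_of_col_notMem _ hT', tmul_ite, Finset.sum_ite_eq', if_pos hj,
      padIdentity_of_col_notMem x hjS, ite_tmul, Algebra.TensorProduct.one_def]

end Transition

section Grassmannian

/-- The columns `-m, …, -1` in increasing order, as used in `qMinor`. -/
def colFin (m : ℕ) (t : Fin m) : ColI m :=
  ⟨-(m : ℤ) + (t : ℕ), by
    have := t.2
    simp only [Finset.mem_Icc]
    omega⟩

lemma strictMono_colFin (m : ℕ) : StrictMono (colFin m) := fun a b h => by
  simpa [colFin] using h

/-- The increasing enumeration of an `s`-element subset `J` of `S`, as a map into `S`. -/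
def orderEmbOfSubset {α : Type*} [LinearOrder α] {S J : Finset α} {s : ℕ} (hJ : J.card = s)
    (hJS : J ⊆ S) : Fin s ↪o S :=
  OrderEmbedding.ofStrictMono (fun t => ⟨J.orderEmbOfFin hJ t, hJS (J.orderEmbOfFin_mem hJ t)⟩)
    fun _ _ h => (J.orderEmbOfFin hJ).strictMono h

lemma bijective_orderEmbOfSubset {α : Type*} [LinearOrder α] (S : Finset α) (s : ℕ) :
    Function.Bijective fun J : S.powersetCard s =>
      orderEmbOfSubset (Finset.mem_powersetCard.mp J.2).2 (Finset.mem_powersetCard.mp J.2).1 := by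
  refine ⟨fun J J' h => ?_, fun e => ?_⟩
  · rw [Subtype.ext_iff, ← Finset.coe_inj,
      ← Finset.range_orderEmbOfFin J.1 (Finset.mem_powersetCard.mp J.2).2,
      ← Finset.range_orderEmbOfFin J'.1 (Finset.mem_powersetCard.mp J'.2).2]
    exact congrArg Set.range (funext fun t => congrArg Subtype.val (DFunLike.congr_fun h t))
  · let J : Finset α := Finset.univ.map (e.toEmbedding.trans (Function.Embedding.subtype _))
    have hJS : J ⊆ S := fun a ha => by
      obtain ⟨t, -, rfl⟩ := Finset.mem_map.mp ha
      exact (e t).2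
    have hJ : J.card = s := by simp [J]
    have henum : (fun t => (e t : α)) = J.orderEmbOfFin hJ :=
      Finset.orderEmbOfFin_unique hJ (fun t => Finset.mem_map_of_mem _ (Finset.mem_univ t))
        e.strictMono
    refine ⟨⟨J, Finset.mem_powersetCard.mpr ⟨hJS, hJ⟩⟩, ?_⟩
    ext t
    exact (congrFun henum t).symm

lemma sum_orderEmb_eq_sum_powersetCard {α N : Type*} [LinearOrder α] [AddCommMonoid N]
    (S : Finset α) (s : ℕ) (F : (Fin s ↪o S) → N) :
    ∑ e, F e = ∑ J ∈ (S.powersetCard s).attach,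
      F (orderEmbOfSubset (Finset.mem_powersetCard.mp J.2).2 (Finset.mem_powersetCard.mp J.2).1) :=
  ((bijective_orderEmbOfSubset S s).sum_comp F).symm

variable (k : Type) [Field k] (m n : ℕ)

lemma qMinor_eq_quantumMinor {I : Finset ℤ} (hI : I.card = m)
    (hsub : I ⊆ Finset.Icc (-(m : ℤ)) ((n : ℤ) - 1)) :
    qMinor k m n I hI hsub = quantumMinor k (av k m n) (orderEmbOfSubset hI hsub) (colFin m) := rfl

lemma qgMinor_eq_quantumMinor {s : ℕ} {I J : Finset ℤ} (hI : I.card = s) (hJ : J.card = s)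
    (hIs : I ⊆ Finset.Icc (-(m : ℤ)) ((n : ℤ) - 1))
    (hJs : J ⊆ Finset.Icc (-(m : ℤ)) ((n : ℤ) - 1)) :
    qgMinor k m n s I J hI hJ hIs hJs =
      quantumMinor k (qgSL k m n) (orderEmbOfSubset hI hIs) (orderEmbOfSubset hJ hJs) :=
  map_quantumMinor (qslMk k m n) (qgen k (RowI m n) (RowI m n)) (orderEmbOfSubset hI hIs)
    (orderEmbOfSubset hJ hJs)

lemma isQuantumMatrix_av : IsQuantumMatrix k (av k m n) := isQuantumMatrix_qgen k _ _

lemma isQuantumMatrix_qgSL : IsQuantumMatrix k (qgSL k m n) :=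
  (isQuantumMatrix_qgen k _ _).map (qslMk k m n)

theorem exists_coactqProp :
    ∃ Λ : QMat k m n →ₐ[kq k] QSL k m n ⊗[kq k] QMat k m n, coactqProp k m n Λ :=
  ((isQuantumMatrix_qgSL k m n).tensorMul (isQuantumMatrix_av k m n)).exists_algHom

variable {k m n} {Λ : QMat k m n →ₐ[kq k] QSL k m n ⊗[kq k] QMat k m n}

theorem coactqProp.apply_qMinor (hΛ : coactqProp k m n Λ) {I : Finset ℤ} (hI : I.card = m)
    (hsub : I ⊆ Finset.Icc (-(m : ℤ)) ((n : ℤ) - 1)) :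
    Λ (qMinor k m n I hI hsub) =
      ∑ J ∈ ((Finset.Icc (-(m : ℤ)) ((n : ℤ) - 1)).powersetCard m).attach,
        qgMinor k m n m I J.1 hI (Finset.mem_powersetCard.mp J.2).2 hsub
            (Finset.mem_powersetCard.mp J.2).1 ⊗ₜ[kq k]
          qMinor k m n J.1 (Finset.mem_powersetCard.mp J.2).2
            (Finset.mem_powersetCard.mp J.2).1 := by
  have hgen : (fun i j => Λ (av k m n i j)) = tensorMul k (qgSL k m n) (av k m n) :=
    funext₂ hΛ
  rw [qMinor_eq_quantumMinor, map_quantumMinor, hgen,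
    (isQuantumMatrix_av k m n).quantumMinor_tensorMul _ _ (strictMono_colFin m),
    sum_orderEmb_eq_sum_powersetCard]
  simp only [qMinor_eq_quantumMinor, qgMinor_eq_quantumMinor]

theorem coactqProp.apply_mem_range (hΛ : coactqProp k m n Λ) {x : QMat k m n}
    (hx : x ∈ QDeltaSub k m n) :
    Λ x ∈ (Algebra.TensorProduct.map (AlgHom.id (kq k) (QSL k m n))
      (QDeltaSub k m n).val).range := by
  suffices h : QDeltaSub k m n ≤ (Algebra.TensorProduct.map (AlgHom.id (kq k) (QSL k m n))
      (QDeltaSub k m n).val).range.comap Λ from h hx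
  refine Algebra.adjoin_le ?_
  rintro _ ⟨I, hI, hsub, rfl⟩
  rw [SetLike.mem_coe, Subalgebra.mem_comap, hΛ.apply_qMinor]
  refine Subalgebra.sum_mem _ fun J _ => ?_
  have hJ : qMinor k m n J.1 (Finset.mem_powersetCard.mp J.2).2
      (Finset.mem_powersetCard.mp J.2).1 ∈ QDeltaSub k m n :=
    Algebra.subset_adjoin ⟨_, _, _, rfl⟩
  exact ⟨_ ⊗ₜ[kq k] ⟨_, hJ⟩, rfl⟩

theorem coactqProp.map_comp_eq_comp (hΛ : coactqProp k m n Λ) {m' n' : ℕ} (hmm : m ≤ m')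
    (hnn : n ≤ n') {Λ' : QMat k m' n' →ₐ[kq k] QSL k m' n' ⊗[kq k] QMat k m' n'}
    (hΛ' : coactqProp k m' n' Λ') {E : QMat k m' n' →ₐ[kq k] QMat k m n}
    (hE : EqProp k m n m' n' E) {φ : QSL k m' n' →ₐ[kq k] QSL k m n}
    (hφ : phiqProp k m n m' n' φ) :
    (Algebra.TensorProduct.map φ E).comp Λ' = Λ.comp E := by
  have hE' (i j) : E (av k m' n' i j) = padIdentity (av k m n) i.1 j.1 := hE i j
  have hφ' (i j) : φ (qgSL k m' n' i j) = padIdentity (qgSL k m n) i.1 j.1 := hφ i j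
  refine algHom_ext_qgen k fun i j => ?_
  have hj := Finset.mem_Icc.mp j.2
  change Algebra.TensorProduct.map φ E (Λ' (av k m' n' i j)) = Λ (E (av k m' n' i j))
  calc
    Algebra.TensorProduct.map φ E (Λ' (av k m' n' i j))
      = ∑ l : RowI m' n',
          padIdentity (qgSL k m n) i.1 l.1 ⊗ₜ[kq k] padIdentity (av k m n) l.1 j.1 := by
        simp only [hΛ' i j, map_sum, Algebra.TensorProduct.map_tmul, hE', hφ']
    _ = padIdentity (tensorMul k (qgSL k m n) (av k m n)) i.1 j.1 := by
        rw [Finset.sum_coe_sort _ fun l =>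
          padIdentity (qgSL k m n) i.1 l ⊗ₜ[kq k] padIdentity (av k m n) l j.1]
        refine sum_padIdentity_tmul_padIdentity _ _ (Finset.Icc_subset_Icc (by omega) (by omega))
          (Finset.Icc_subset_Icc_right (by omega)) ?_ ?_ <;> simp only [Finset.mem_Icc] <;> omega
    _ = Λ (E (av k m' n' i j)) := by
        rw [hE', map_padIdentity]
        exact congrArg (padIdentity · i.1 j.1) (funext₂ hΛ).symm

end Grassmannian

theorem stmt16_general (k : Type) [Field k] (m n m' n' : ℕ) (hmm : m ≤ m') (hnn : n ≤ n') :
    (∃ Λ : QMat k m n →ₐ[kq k] QSL k m n ⊗[kq k] QMat k m n, coactqProp k m n Λ) ∧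
    (∀ Λ : QMat k m n →ₐ[kq k] QSL k m n ⊗[kq k] QMat k m n, coactqProp k m n Λ →
      (∀ (I : Finset ℤ) (hI : I.card = m)
          (hsub : I ⊆ Finset.Icc (-(m : ℤ)) ((n : ℤ) - 1)),
        Λ (qMinor k m n I hI hsub) =
          ∑ J ∈ ((Finset.Icc (-(m : ℤ)) ((n : ℤ) - 1)).powersetCard m).attach,
            qgMinor k m n m I J.1 hI (Finset.mem_powersetCard.mp J.2).2 hsub
                (Finset.mem_powersetCard.mp J.2).1 ⊗ₜ[kq k]
              qMinor k m n J.1 (Finset.mem_powersetCard.mp J.2).2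
                (Finset.mem_powersetCard.mp J.2).1) ∧
      (∀ x ∈ QDeltaSub k m n, Λ x ∈
        (Algebra.TensorProduct.map (AlgHom.id (kq k) (QSL k m n))
          (QDeltaSub k m n).val).range) ∧
      (∀ Λ' : QMat k m' n' →ₐ[kq k] QSL k m' n' ⊗[kq k] QMat k m' n',
        coactqProp k m' n' Λ' →
        ∀ E : QMat k m' n' →ₐ[kq k] QMat k m n, EqProp k m n m' n' E →
        ∀ φ : QSL k m' n' →ₐ[kq k] QSL k m n, phiqProp k m n m' n' φ →
        (Algebra.TensorProduct.map φ E).comp Λ' = Λ.comp E)) :=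
  ⟨exists_coactqProp k m n, fun _ hΛ => ⟨fun _ hI hsub => hΛ.apply_qMinor hI hsub,
    fun _ hx => hΛ.apply_mem_range hx,
    fun _ hΛ' _ hE _ hφ => hΛ.map_comp_eq_comp hmm hnn hΛ' hE hφ⟩⟩

/-- the quantum coaction `Λ^q_{(m,n)}` exists, satisfies
`Λ^q(D_I) = Σ_J D^{g,J}_I ⊗ D_J`, hence maps `k_q[Δ_{m,n}]` into
`k_q[SL_{m,n}] ⊗ k_q[Δ_{m,n}]`, and the restrictions are compatible with the
transition maps: `(φ^q ⊗ e^q) ∘ λ^q_{(m',n')} = λ^q_{(m,n)} ∘ e^q`. -/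
theorem stmt16 (k : Type) [Field k] (m n m' n' : ℕ) (hm : 0 < m) (hn : 0 < n)
    (hmm : m ≤ m') (hnn : n ≤ n') :
    -- existence
    (∃ Λ : QMat k m n →ₐ[kq k] QSL k m n ⊗[kq k] QMat k m n, coactqProp k m n Λ) ∧
    (∀ Λ : QMat k m n →ₐ[kq k] QSL k m n ⊗[kq k] QMat k m n, coactqProp k m n Λ →
      -- the image of a quantum minor
      (∀ (I : Finset ℤ) (hI : I.card = m)
          (hsub : I ⊆ Finset.Icc (-(m : ℤ)) ((n : ℤ) - 1)),
        Λ (qMinor k m n I hI hsub) =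
          ∑ J ∈ ((Finset.Icc (-(m : ℤ)) ((n : ℤ) - 1)).powersetCard m).attach,
            qgMinor k m n m I J.1 hI (Finset.mem_powersetCard.mp J.2).2 hsub
                (Finset.mem_powersetCard.mp J.2).1 ⊗ₜ[kq k]
              qMinor k m n J.1 (Finset.mem_powersetCard.mp J.2).2
                (Finset.mem_powersetCard.mp J.2).1) ∧
      -- Λ maps the quantum grassmannian into k_q[SL_{m,n}] ⊗ k_q[Δ_{m,n}]
      (∀ x ∈ QDeltaSub k m n, Λ x ∈
        (Algebra.TensorProduct.map (AlgHom.id (kq k) (QSL k m n))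
          (QDeltaSub k m n).val).range) ∧
      -- compatibility with the transition maps
      (∀ Λ' : QMat k m' n' →ₐ[kq k] QSL k m' n' ⊗[kq k] QMat k m' n',
        coactqProp k m' n' Λ' →
        ∀ E : QMat k m' n' →ₐ[kq k] QMat k m n, EqProp k m n m' n' E →
        ∀ φ : QSL k m' n' →ₐ[kq k] QSL k m n, phiqProp k m n m' n' φ →
        ∀ x ∈ QDeltaSub k m' n',
          Algebra.TensorProduct.map φ E (Λ' x) = Λ (E x))) := by
  obtain ⟨hex, h⟩ := stmt16_general k m n m' n' hmm hnn
  exact ⟨hex, fun Λ hΛ => ⟨(h Λ hΛ).1, (h Λ hΛ).2.1, fun Λ' hΛ' E hE φ hφ x _ =>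
    DFunLike.congr_fun ((h Λ hΛ).2.2 Λ' hΛ' E hE φ hφ) x⟩⟩

end
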